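/- Fix integers d ≥ 2 and D ≥ 2 and set C_d := 8/(d−1). If e is a directed edge of K(d,D) whose edge-word w(e) is an unbordered 7/4⁺-power-free ternary word, then U_D(e) ≥ (D − C_d)·d^{D−1} and cong(e) ≥ (d/(d−1))·(1 − 1/(D(d−1)))·(D − C_d)·d^{D−1}. -/

import Mathlib

/-!
A pair `(x, y)` joined by a walk of length `D` through `e` as `t`-th edge amounts to a word `z = x y`
of length `2D` that contains the edge-word `w` at position `t - 1`; there are `d ^ (D - 1)` such
words. The distance of `x` and `y` is smaller than `D` exactly when some suffix of `x` is a prefix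
of `y`, that is, when `z` has a square of some period `r ≤ D` at its centre
(`walk_shift`, `window_dist`).

Such a square cannot lie inside `w`, because `w` is `7/4⁺`-power-free, and it cannot cover `w`,
because then `w` would have a border. So it sticks out of `w` on one side only (`square_cases`): on
the right this makes the suffix of `w` of length `t` reoccur in `w` after a gap of `m = r - t`
letters, and it prescribes `m` letters of `z`, so at most `d ^ (D - 1 - m)` words are lost
(`N_lower`); the left side is symmetric, with the prefix of length `D + 1 - t`.

For a fixed gap `m`, a repeated suffix of length `j` satisfies `j ≤ 3 m`, and if `j < j'` are two
such lengths then the shorter suffix reoccurs at distance `j' - j`, so `4 j ≤ 3 (j' - j)`. These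
inequalities make `j ↦ j / 3` injective with values in `{0, …, m}`, so the total weight of the
repeats is at most `∑ (m + 1) d^{-m} ≤ 3 / (d - 1)` (`sum_repeats_le`). Adding both sides gives
`U_D(e) ≥ (D - 6 / (d - 1)) d ^ (D - 1)` (`U_lower`).

For the congestion, deleting the first or the last edge of a geodesic gives
`N(e;k+1,t) ≤ d N(e;k,t)` and `N(e;k+1,t+1) ≤ d N(e;k,t)`. A weighted sum of these yields
`k U_{k+1}(e) ≤ (k + 1) d U_k(e)` (`U_step`), whence `U_{D-i}(e) ≥ (1 - i / D) d^{-i} U_D(e)`, and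
summing over `i < D` produces the stated factor (`cong_lower`).
-/

open scoped BigOperators Classical

namespace Kautz

/-- A vertex of the Kautz digraph `K(d,D)`: a word of length `D` over the
alphabet `{0,1,…,d}` in which adjacent letters are distinct. -/
structure Vertex (d D : ℕ) where
  word : List (Fin (d+1))
  length_eq : word.length = D
  chain : word.Chain' (· ≠ ·)

/-- Adjacency in `K(d,D)`: there is an edge `u → v` iff some word `w` of length
`D+1` with adjacent letters distinct has `u` as its prefix of length `D` and
`v` as its suffix of length `D`. -/
def Adj {d D : ℕ} (u v : Vertex d D) : Prop :=
  ∃ w : List (Fin (d+1)), w.length = D + 1 ∧ w.Chain' (· ≠ ·) ∧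
    u.word = w.dropLast ∧ v.word = w.tail

/-- A directed edge of `K(d,D)`. -/
structure Edge (d D : ℕ) where
  src : Vertex d D
  tgt : Vertex d D
  adj : Adj src tgt

/-- The edge-word `w(e) = a₀a₁⋯a_D` of an edge `e : u → v`, namely `u`
followed by the last letter of `v`. -/
def Edge.word {d D : ℕ} (e : Edge d D) : List (Fin (d+1)) :=
  e.src.word ++ e.tgt.word.drop (D - 1)

/-- `p` is a walk from `x` to `y`, recorded as the list of successive vertices. -/
def IsWalk {d D : ℕ} (p : List (Vertex d D)) (x y : Vertex d D) : Prop :=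
  p.head? = some x ∧ p.getLast? = some y ∧ p.Chain' Adj

/-- Directed graph distance in `K(d,D)`. -/
noncomputable def dist {d D : ℕ} (x y : Vertex d D) : ℕ :=
  sInf {k | ∃ p : List (Vertex d D), IsWalk p x y ∧ p.length = k + 1}

/-- `N(e;k,t)`: the number of ordered pairs `(x,y)` with `dist x y = k` such
that some geodesic (walk of length `k = dist x y`) from `x` to `y` uses `e` as
its `t`-th edge. -/
noncomputable def N {d D : ℕ} (e : Edge d D) (k t : ℕ) : ℕ :=
  Set.ncard {xy : Vertex d D × Vertex d D |
    dist xy.1 xy.2 = k ∧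
    ∃ p : List (Vertex d D), IsWalk p xy.1 xy.2 ∧ p.length = k + 1 ∧
      p[t-1]? = some e.src ∧ p[t]? = some e.tgt}

/-- `U_k(e) = ∑_{t=1}^{k} N(e;k,t)`. -/
noncomputable def U {d D : ℕ} (e : Edge d D) (k : ℕ) : ℕ :=
  ∑ t ∈ Finset.Icc 1 k, N e k t

/-- `cong(e) = ∑_{k=1}^{D} U_k(e)`. -/
noncomputable def cong {d D : ℕ} (e : Edge d D) : ℕ :=
  ∑ k ∈ Finset.Icc 1 D, U e k

/-- `τ(d,D) = (D−1)·d^{D−2} + D·d^{D−1}`. -/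
def tau (d D : ℕ) : ℕ := (D - 1) * d ^ (D - 2) + D * d ^ (D - 1)

/-- A word has a border: some proper nonempty prefix equals the suffix of the
same length. -/
def HasBorder {α : Type*} (w : List α) : Prop :=
  ∃ ℓ, 1 ≤ ℓ ∧ ℓ ≤ w.length - 1 ∧ w.take ℓ = w.drop (w.length - ℓ)

/-- An unbordered word. -/
def Unbordered {α : Type*} (w : List α) : Prop := ¬ HasBorder w

/-- A square-free word: no nonempty factor of the form `XX`. -/
def SquareFree {α : Type*} (w : List α) : Prop :=
  ¬ ∃ X : List α, X ≠ [] ∧ (X ++ X) <:+: w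

/-- A `7/4⁺`-power-free word: no factor `x^k y` with `x` nonempty, `k ≥ 1`,
`y` a prefix of `x`, and `(k·|x| + |y|)/|x| > 7/4`. -/
def SevenFourthsPlusFree {α : Type*} (w : List α) : Prop :=
  ¬ ∃ (x y : List α) (k : ℕ), x ≠ [] ∧ 1 ≤ k ∧ y <+: x ∧
    ((List.replicate k x).flatten ++ y) <:+: w ∧
    7 * x.length < 4 * (k * x.length + y.length)

/-- A word over `{0,1,…,d}` is ternary if it uses only the letters `{0,1,2}`. -/
def IsTernary {n : ℕ} (w : List (Fin n)) : Prop := ∀ a ∈ w, (a : ℕ) < 3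

/-- The suffix of `w` of length `t`. -/
def suffixWord {α : Type*} (w : List α) (t : ℕ) : List α := w.drop (w.length - t)

/-- `R_t(w)`: the set of admissible overlap lengths `r` at position `t`, i.e.
those `r` with `t+1 ≤ r ≤ |w|−t−1` such that `w = A·B·V·B` where `B` is the
suffix of `w` of length `t`, `V` is nonempty, and `|B·V| = r`. -/
noncomputable def Rt {α : Type*} (w : List α) (t : ℕ) : Finset ℕ :=
  (Finset.Icc (t + 1) (w.length - t - 1)).filter fun r =>
    ∃ A V : List α, V ≠ [] ∧
      w = A ++ suffixWord w t ++ V ++ suffixWord w t ∧ t + V.length = r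

/-- The deficit `Δ_t(e) = d^{D−1} − N(e;D,t)`. -/
noncomputable def deficit {d D : ℕ} (e : Edge d D) (t : ℕ) : ℝ :=
  (d : ℝ) ^ (D - 1) - (N e D t : ℝ)

/-- The total deficit `Δ(e) = ∑_{t=1}^{D} Δ_t(e)`. -/
noncomputable def totalDeficit {d D : ℕ} (e : Edge d D) : ℝ :=
  ∑ t ∈ Finset.Icc 1 D, deficit e t

/-- The weighted overlap count
`Ω_d(e) = ∑_{j=1}^{⌈(D+1)/2⌉} ∑_{r ∈ R_j(w(e))} d^{−(r−j)}`. -/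
noncomputable def Omega {d D : ℕ} (e : Edge d D) : ℝ :=
  ∑ j ∈ Finset.Icc 1 ((D + 2) / 2), ∑ r ∈ Rt e.word j, (d : ℝ) ^ ((j : ℤ) - (r : ℤ))

/-- The overlap `ov(u,v)`: the largest `j ≤ D` such that the last `j` letters
of `u` equal the first `j` letters of `v`. -/
noncomputable def ov {d D : ℕ} (u v : Vertex d D) : ℕ :=
  sSup {j | j ≤ D ∧ u.word.drop (D - j) = v.word.take j}

end Kautz

namespace Kautz

/-! ### Repetitions in the edge-word -/

/-- In a `7/4⁺`-power-free word two occurrences of a factor of length `j` at distance `r` satisfy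
`4 j ≤ 3 r`: together they span a factor of length `r + j` and period `r`. -/
lemma four_mul_le_of_repeat {α : Type*} {w : List α} (h : SevenFourthsPlusFree w)
    {i r j : ℕ} (hr : 1 ≤ r) (hlen : i + r + j ≤ w.length)
    (heq : ∀ q < j, w[i + q]? = w[i + r + q]?) : 4 * j ≤ 3 * r := by
  -- A repeat longer than the period contains a square, so only `j ≤ r` needs the hypothesis.
  have key : ∀ j, j ≤ r → i + r + j ≤ w.length →
      (∀ q < j, w[i + q]? = w[i + r + q]?) → 4 * j ≤ 3 * r := by
    intro j hj hlen heq
    by_contra hcon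
    apply h
    have hy : (w.drop i).take j = (w.drop (i + r)).take j := by
      apply List.ext_getElem?
      intro q
      by_cases hq : q < j
      · simp only [List.getElem?_take, List.getElem?_drop, hq, if_true]
        exact heq q hq
      · simp [hq]
    refine ⟨(w.drop i).take r, (w.drop i).take j, 1, ?_, le_rfl, ?_, ?_, ?_⟩
    · intro hnil
      have := congrArg List.length hnil
      simp at this
      omega
    · rw [show (w.drop i).take j = ((w.drop i).take r).take j by
        rw [List.take_take, min_eq_left hj]]
      exact List.take_prefix _ _
    · have : (List.replicate 1 ((w.drop i).take r)).flatten ++ (w.drop i).take j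
          = (w.drop i).take (r + j) := by
        rw [hy, List.take_add, List.drop_drop]
        simp
      rw [this]
      exact (List.take_prefix _ _).isInfix.trans (List.drop_suffix _ _).isInfix
    · simp only [List.length_take, List.length_drop]
      omega
  by_cases hj : j ≤ r
  · exact key j hj hlen heq
  · have := key r le_rfl (by omega) (fun q hq => heq q (by omega))
    omega

/-- A word of length `s + l` with period `s` has the border of length `l`. -/
lemma not_border {α : Type*} {w : List α} (h : Unbordered w) {l s : ℕ}
    (hl : 1 ≤ l) (hs : 1 ≤ s) (hlen : s + l = w.length)
    (heq : ∀ q < l, w[q]? = w[s + q]?) : False := by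
  apply h
  refine ⟨l, hl, by omega, ?_⟩
  apply List.ext_getElem?
  intro q
  rw [show w.length - l = s by omega]
  by_cases hq : q < l
  · simp only [List.getElem?_take, List.getElem?_drop, hq, if_true]
    exact heq q hq
  · rw [List.getElem?_eq_none (by simp; omega), List.getElem?_eq_none (by simp; omega)]

/-- `PR w D j m`: the suffix of length `j` of `w` (a word of length `D + 1`) has an earlier
occurrence, separated from it by a gap of `m` letters and not at the very start of `w`. -/
def PR {α : Type*} (w : List α) (D j m : ℕ) : Prop :=
  j + m < D + 1 - j ∧ ∀ q < j, w[D + 1 - (j + j + m) + q]? = w[D + 1 - j + q]?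

/-- `PL w D j m`: the prefix of length `j` of `w` (a word of length `D + 1`) has a later
occurrence, separated from it by a gap of `m` letters and not at the very end of `w`. -/
def PL {α : Type*} (w : List α) (D j m : ℕ) : Prop :=
  j + m < D + 1 - j ∧ ∀ q < j, w[q]? = w[j + m + q]?

/-- Suffixes of lengths `j < j'` repeating across gaps of the same size `m`: the shorter one then
occurs twice at distance `j' - j`. -/
lemma PR_gap {α : Type*} {w : List α} (h : SevenFourthsPlusFree w) {D : ℕ}
    (hw : w.length = D + 1) {j j' m : ℕ} (hj : 1 ≤ j) (hjj : j < j')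
    (h1 : PR w D j m) (h2 : PR w D j' m) : 4 * j ≤ 3 * (j' - j) := by
  obtain ⟨a1, b1⟩ := h1
  obtain ⟨a2, b2⟩ := h2
  apply four_mul_le_of_repeat h (i := D + 1 - (j + j' + m)) (by omega) (by omega)
  intro q hq
  have e1 := b1 q hq
  have e2 := b2 (j' - j + q) (by omega)
  rw [show D + 1 - j' + (j' - j + q) = D + 1 - j + q by omega, ← e1] at e2
  convert e2 using 2 <;> omega

lemma PL_gap {α : Type*} {w : List α} (h : SevenFourthsPlusFree w) {D : ℕ}
    (hw : w.length = D + 1) {j j' m : ℕ} (hjj : j < j')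
    (h1 : PL w D j m) (h2 : PL w D j' m) : 4 * j ≤ 3 * (j' - j) := by
  obtain ⟨a1, b1⟩ := h1
  obtain ⟨a2, b2⟩ := h2
  apply four_mul_le_of_repeat h (i := j + m) (by omega) (by omega)
  intro q hq
  rw [← b1 q hq, b2 q (by omega)]
  congr 1
  omega

lemma PR_le {α : Type*} {w : List α} (h : SevenFourthsPlusFree w) {D : ℕ}
    (hw : w.length = D + 1) {j m : ℕ} (hj : 1 ≤ j)
    (h1 : PR w D j m) : 4 * j ≤ 3 * (j + m) := by
  obtain ⟨a1, b1⟩ := h1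
  apply four_mul_le_of_repeat h (i := D + 1 - (j + j + m)) (by omega) (by omega)
  intro q hq
  rw [b1 q hq]
  congr 1
  omega

lemma PL_le {α : Type*} {w : List α} (h : SevenFourthsPlusFree w) {D : ℕ}
    (hw : w.length = D + 1) {j m : ℕ} (hj : 1 ≤ j)
    (h1 : PL w D j m) : 4 * j ≤ 3 * (j + m) := by
  obtain ⟨a1, b1⟩ := h1
  apply four_mul_le_of_repeat h (i := 0) (by omega) (by omega)
  intro q hq
  rw [Nat.zero_add, Nat.zero_add, b1 q hq]

/-! ### Summing the weights -/

/-- Partial sums of `∑ (m + 1) d^{-m}`, with a remainder term that makes the induction close. -/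
lemma sum_weights_le {d : ℕ} (hd : 2 ≤ d) (M : ℕ) :
    ∑ m ∈ Finset.Icc 1 M, ((m : ℝ) + 1) * ((d : ℝ)⁻¹) ^ m
      ≤ 3 / ((d : ℝ) - 1) - ((M : ℝ) + 3) / ((d : ℝ) - 1) * ((d : ℝ)⁻¹) ^ M := by
  have hd' : (2 : ℝ) ≤ d := by exact_mod_cast hd
  induction M with
  | zero => simp
  | succ M ih =>
    rw [Finset.sum_Icc_succ_top (by omega)]
    have hx : (0 : ℝ) < ((d : ℝ)⁻¹) ^ (M + 1) := by positivity
    have e : ((d : ℝ)⁻¹) ^ M = d * ((d : ℝ)⁻¹) ^ (M + 1) := by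
      rw [pow_succ]; field_simp
    rw [e] at ih
    have h1 : (0 : ℝ) < (d : ℝ) - 1 := by linarith
    push_cast
    have : 0 ≤ (((M : ℝ) + 3) / ((d : ℝ) - 1) * d - ((M : ℝ) + 1 + 3) / ((d : ℝ) - 1)
        - ((M : ℝ) + 1 + 1)) * ((d : ℝ)⁻¹) ^ (M + 1) := by
      apply mul_nonneg _ hx.le
      have : ((M : ℝ) + 3) / ((d : ℝ) - 1) * d - ((M : ℝ) + 1 + 3) / ((d : ℝ) - 1)
        - ((M : ℝ) + 1 + 1) = (d - 2) / (d - 1) := by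
        field_simp; ring
      rw [this]
      exact div_nonneg (by linarith) h1.le
    nlinarith

/-- The total weight of all repeats.  For a fixed gap `m` the admissible lengths satisfy `j ≤ 3 m`
and grow geometrically, so that `j ↦ j / 3` is injective on them and there are at most `m + 1`. -/
lemma sum_repeats_le {d D : ℕ} (hd : 2 ≤ d) (P : ℕ → ℕ → Prop)
    (h1 : ∀ j m, 1 ≤ j → P j m → 4 * j ≤ 3 * (j + m))
    (h2 : ∀ j j' m, 1 ≤ j → j < j' → P j m → P j' m → 4 * j ≤ 3 * (j' - j)) :
    ∑ j ∈ Finset.Icc 1 D, ∑ m ∈ Finset.Icc 1 D with P j m, ((d : ℝ)⁻¹) ^ m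
      ≤ 3 / ((d : ℝ) - 1) := by
  have hd' : (2 : ℝ) ≤ d := by exact_mod_cast hd
  have hcard : ∀ m, ((Finset.Icc 1 D).filter (fun j => P j m)).card ≤ m + 1 := by
    intro m
    rw [← Finset.card_range (m + 1)]
    apply Finset.card_le_card_of_injOn (fun j => j / 3)
    · intro j hj
      simp only [Finset.coe_filter, Finset.mem_Icc, Set.mem_ofPred_eq] at hj
      have := h1 j m hj.1.1 hj.2
      simp only [Finset.coe_range, Set.mem_Iio]
      omega
    · intro a ha b hb hab
      simp only [Finset.coe_filter, Finset.mem_Icc, Set.mem_ofPred_eq] at ha hb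
      simp only at hab
      rcases lt_trichotomy a b with hlt | heq | hgt
      · have := h2 a b m ha.1.1 hlt ha.2 hb.2
        omega
      · exact heq
      · have := h2 b a m hb.1.1 hgt hb.2 ha.2
        omega
  calc ∑ j ∈ Finset.Icc 1 D, ∑ m ∈ Finset.Icc 1 D with P j m, ((d : ℝ)⁻¹) ^ m
      = ∑ m ∈ Finset.Icc 1 D, ∑ j ∈ Finset.Icc 1 D with P j m, ((d : ℝ)⁻¹) ^ m := by
        simp only [Finset.sum_filter]
        rw [Finset.sum_comm]
    _ ≤ ∑ m ∈ Finset.Icc 1 D, ((m : ℝ) + 1) * ((d : ℝ)⁻¹) ^ m := by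
        apply Finset.sum_le_sum
        intro m _
        rw [Finset.sum_const, nsmul_eq_mul]
        apply mul_le_mul_of_nonneg_right _ (by positivity)
        exact_mod_cast hcard m
    _ ≤ 3 / ((d : ℝ) - 1) - ((D : ℝ) + 3) / ((d : ℝ) - 1) * ((d : ℝ)⁻¹) ^ D :=
        sum_weights_le hd D
    _ ≤ 3 / ((d : ℝ) - 1) := by
        have : 0 ≤ ((D : ℝ) + 3) / ((d : ℝ) - 1) * ((d : ℝ)⁻¹) ^ D :=
          mul_nonneg (div_nonneg (by positivity) (by linarith)) (by positivity)
        linarith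

/-- A partial sum of `∑ (D - i) d^{-i}`, together with its exact remainder. -/
lemma sum_levels {d D : ℕ} (hd : 2 ≤ d) (n : ℕ) :
    ∑ i ∈ Finset.range n, ((D : ℝ) - i) * ((d : ℝ)⁻¹) ^ i
      = (d : ℝ) / (d - 1) * (D - 1 / (d - 1))
        - ((d : ℝ)⁻¹) ^ n * ((d : ℝ) / (d - 1) * (D - n - 1 / (d - 1))) := by
  have hd' : (2 : ℝ) ≤ d := by exact_mod_cast hd
  induction n with
  | zero => simp
  | succ n ih =>
    rw [Finset.sum_range_succ, ih, pow_succ]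
    have h1 : (d : ℝ) - 1 ≠ 0 := by linarith
    push_cast
    field_simp
    ring

/-! ### Counting extensions of a word -/

/-- The words `s` of length `n` for which `a :: s` has distinct adjacent letters. -/
def ext {d : ℕ} : Fin (d + 1) → ℕ → Finset (List (Fin (d + 1)))
  | _, 0 => {[]}
  | a, n + 1 => (Finset.univ.erase a).biUnion fun b => (ext b n).image (List.cons b)

lemma mem_ext {d : ℕ} {a : Fin (d + 1)} {n : ℕ} {s : List (Fin (d + 1))} :
    s ∈ ext a n ↔ s.length = n ∧ (a :: s).IsChain (· ≠ ·) := by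
  induction n generalizing a s with
  | zero =>
    simp only [ext, Finset.mem_singleton, List.length_eq_zero_iff]
    constructor
    · rintro rfl; simp
    · exact fun h => h.1
  | succ n ih =>
    cases s with
    | nil => simp [ext]
    | cons b s =>
      simp only [ext, Finset.mem_biUnion, Finset.mem_erase, Finset.mem_univ, and_true,
        Finset.mem_image, List.cons.injEq, List.isChain_cons_cons, List.length_cons]
      constructor
      · rintro ⟨b', hb', s', hs', rfl, rfl⟩
        have := ih.1 hs'
        exact ⟨by omega, hb'.symm, this.2⟩
      · rintro ⟨hl, hab, hc⟩
        exact ⟨b, hab.symm, s, ih.2 ⟨by omega, hc⟩, rfl, rfl⟩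

lemma card_ext {d : ℕ} (a : Fin (d + 1)) (n : ℕ) : (ext a n).card = d ^ n := by
  induction n generalizing a with
  | zero => simp [ext]
  | succ n ih =>
    rw [ext, Finset.card_biUnion]
    · simp only [Finset.card_image_of_injective _ (List.cons_injective), ih]
      simp [pow_succ, mul_comm]
    · intro b _ c _ hbc
      rw [Function.onFun, Finset.disjoint_left]
      intro s hs hs'
      obtain ⟨u, _, rfl⟩ := Finset.mem_image.1 hs
      obtain ⟨v, _, hv⟩ := Finset.mem_image.1 hs'
      exact hbc (List.cons.inj hv).1.symm

/-- Prescribing the first `m` letters leaves at most `d ^ (n - m)` extensions. -/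
lemma card_ext_prescribed {d : ℕ} (a : Fin (d + 1)) (n m : ℕ) (hm : m ≤ n)
    (f : ℕ → Option (Fin (d + 1))) :
    ((ext a n).filter (fun s => ∀ u < m, s[u]? = f u)).card ≤ d ^ (n - m) := by
  induction m generalizing a n f with
  | zero => exact (Finset.card_filter_le _ _).trans (card_ext a n).le
  | succ m ih =>
    obtain ⟨n, rfl⟩ : ∃ k, n = k + 1 := ⟨n - 1, by omega⟩
    rcases hf : f 0 with _ | b
    · rw [Finset.filter_eq_empty_iff.2]
      · simp
      · intro s hs hcon
        have h0 := hcon 0 (by omega)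
        rw [hf, List.getElem?_eq_none_iff, (mem_ext.1 hs).1] at h0
        omega
    · have : (ext a (n + 1)).filter (fun s => ∀ u < m + 1, s[u]? = f u) ⊆
          ((ext b n).filter (fun s => ∀ u < m, s[u]? = f (u + 1))).image (List.cons b) := by
        intro s hs
        obtain ⟨hs, hu⟩ := Finset.mem_filter.1 hs
        cases s with
        | nil => simp [mem_ext] at hs
        | cons c s =>
          have hc := hu 0 (by omega)
          rw [hf] at hc
          simp only [List.getElem?_cons_zero, Option.some.injEq] at hc
          subst hc
          rw [mem_ext, List.isChain_cons_cons] at hs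
          refine Finset.mem_image.2 ⟨s, Finset.mem_filter.2 ⟨mem_ext.2 ⟨by simpa using hs.1, hs.2.2⟩,
            fun u hu' => ?_⟩, rfl⟩
          simpa using hu (u + 1) (by omega)
      refine (Finset.card_le_card this).trans (Finset.card_image_le.trans ?_)
      rw [Nat.add_sub_add_right]
      exact ih b n (by omega) _

/-! ### Walks in the Kautz digraph -/

lemma Vertex.eq_of_word {d D : ℕ} {x y : Vertex d D} (h : x.word = y.word) : x = y := by
  cases x; cases y; simpa using h

instance {d D : ℕ} : Finite (Vertex d D) := by
  have : Finite {l : List (Fin (d + 1)) | l.length = D} :=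
    (List.finite_length_eq (Fin (d + 1)) D).to_subtype
  exact Finite.of_injective
    (fun x : Vertex d D => (⟨x.word, x.length_eq⟩ : {l : List (Fin (d + 1)) | l.length = D}))
    (fun x y h => Vertex.eq_of_word (congrArg Subtype.val h))

lemma edge_word {d D : ℕ} (hD : 1 ≤ D) (e : Edge d D) :
    e.word.length = D + 1 ∧ e.word.IsChain (· ≠ ·) ∧
      e.src.word = e.word.take D ∧ e.tgt.word = e.word.drop 1 := by
  obtain ⟨w, hl, hc, hs, ht⟩ := e.adj
  have hw : e.word = w := by
    rw [Edge.word, hs, ht, List.dropLast_eq_take, hl, ← List.drop_one, List.drop_drop,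
      show 1 + (D - 1) = D by omega, Nat.add_sub_cancel, List.take_append_drop]
  rw [hw]
  refine ⟨hl, hc, ?_, ?_⟩
  · rw [hs, List.dropLast_eq_take, hl, Nat.add_sub_cancel]
  · rw [ht, List.drop_one]

lemma adj_shift {d D : ℕ} {u v : Vertex d D} (h : Adj u v) {q : ℕ} (hq : q + 1 < D) :
    u.word[q + 1]? = v.word[q]? := by
  obtain ⟨w, hl, -, hu, hv⟩ := h
  rw [hu, hv, List.dropLast_eq_take, List.getElem?_take, if_pos (by omega), ← List.drop_one,
    List.getElem?_drop, Nat.add_comm q 1]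

/-- After a walk of length `k` the word has been shifted by `k` letters. -/
lemma walk_shift {d D : ℕ} (p : List (Vertex d D)) {k : ℕ} {x y : Vertex d D}
    (hp : IsWalk p x y) (hl : p.length = k + 1) {q : ℕ} (hq : q + k < D) :
    x.word[q + k]? = y.word[q]? := by
  induction k generalizing p x with
  | zero =>
    obtain ⟨a, rfl⟩ := List.length_eq_one_iff.1 hl
    obtain ⟨h1, h2, -⟩ := hp
    simp at h1 h2
    subst h1; subst h2; rfl
  | succ k ih =>
    match p, hl with
    | a :: b :: p, hl =>
      obtain ⟨h1, h2, h3⟩ := hp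
      simp only [List.head?_cons, Option.some.injEq] at h1
      subst h1
      have h3' : Adj a b ∧ (b :: p).IsChain Adj := List.isChain_cons_cons.1 h3
      rw [← ih (b :: p) ⟨rfl, by simpa [List.getLast?_cons_cons] using h2, h3'.2⟩
        (by simpa using hl) (by omega)]
      exact adj_shift h3'.1 (by omega)

lemma dist_le {d D : ℕ} {x y : Vertex d D} {p : List (Vertex d D)} {k : ℕ}
    (hp : IsWalk p x y) (hl : p.length = k + 1) : dist x y ≤ k :=
  Nat.sInf_le ⟨p, hp, hl⟩

/-- The window of length `D` starting at position `i` of a word, as a vertex. -/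
def window {d D : ℕ} (z : List (Fin (d + 1))) (hc : z.IsChain (· ≠ ·)) (i : ℕ)
    (h : i + D ≤ z.length) : Vertex d D where
  word := (z.drop i).take D
  length_eq := by simp; omega
  chain := (hc.drop i).take D

/-- A word of length `2D` without a square of period at most `D` at its centre gives a pair at
distance `D`, whose geodesic consists of the successive windows. -/
lemma window_dist {d D : ℕ} (z : List (Fin (d + 1))) (hc : z.IsChain (· ≠ ·))
    (hl : z.length = D + D)
    (hgood : ∀ k < D, ¬ ∀ q, q + k < D → z[q + k]? = z[D + q]?) :
    dist (window (D := D) z hc 0 (by omega)) (window (D := D) z hc D (by omega)) = D ∧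
    ∃ p : List (Vertex d D), IsWalk p (window z hc 0 (by omega)) (window z hc D (by omega)) ∧
      p.length = D + 1 ∧ ∀ i (h : i ≤ D), p[i]? = some (window z hc i (by omega)) := by
  let p : List (Vertex d D) :=
    List.ofFn (fun i : Fin (D + 1) => window z hc i (by have := i.2; omega))
  have hpl : p.length = D + 1 := by simp [p]
  have hpi : ∀ i (h : i ≤ D), p[i]? = some (window z hc i (by omega)) := by
    intro i h
    rw [List.getElem?_eq_getElem (by omega)]
    simp only [p, List.getElem_ofFn]
  have hw : IsWalk p (window z hc 0 (by omega)) (window z hc D (by omega)) := by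
    refine ⟨?_, ?_, ?_⟩
    · rw [List.head?_eq_getElem?, hpi 0 (by omega)]
    · rw [List.getLast?_eq_getElem?, hpl, Nat.add_sub_cancel, hpi D le_rfl]
    · change p.IsChain Adj
      rw [List.isChain_iff_getElem]
      intro i hi
      simp only [p, List.getElem_ofFn]
      refine ⟨(z.drop i).take (D + 1), by simp; omega, (hc.drop i).take _, ?_, ?_⟩
      · simp only [window]
        rw [List.dropLast_eq_take, List.take_take]
        congr 1
        simp; omega
      · simp only [window]
        rw [← List.drop_one, List.drop_take, List.drop_drop]
        simp
  refine ⟨le_antisymm (dist_le hw hpl) ?_, p, hw, hpl, hpi⟩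
  rw [dist]
  refine le_csInf ⟨D, p, hw, hpl⟩ ?_
  rintro k ⟨p', hp', hl'⟩
  by_contra hk
  apply hgood k (by omega)
  intro q hq
  have := walk_shift p' hp' hl' hq
  simp only [window, List.getElem?_take, List.getElem?_drop] at this
  rwa [if_pos hq, if_pos (by omega), Nat.zero_add] at this

/-! ### Pairs at maximal distance -/

/-- The heart of the deficit estimate.  Let `w` occupy the positions `t - 1, …, t - 1 + D` of a
word `z` of length `2D`, with reversed prefix `p` before it and `s` after it.  A square of
period `r ≤ D` centred in `z` either lies in `w` (impossible), or covers `w` and yields a border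
(impossible), or overhangs `w` on exactly one side, where it prescribes `|r - t|` resp.
`|r - (D + 1 - t)|` letters. -/
lemma square_cases {α : Type*} {w z p s : List α} {D t : ℕ} (hw : w.length = D + 1)
    (hub : Unbordered w) (h74 : SevenFourthsPlusFree w) (ht : 1 ≤ t) (htD : t ≤ D)
    (hzp : ∀ u, u + 1 < t → z[t - 2 - u]? = p[u]?)
    (hzw : ∀ q ≤ D, z[t - 1 + q]? = w[q]?)
    (hzs : ∀ u, z[t + D + u]? = s[u]?)
    {r : ℕ} (hr : 1 ≤ r) (hrD : r ≤ D) (hsq : ∀ i < r, z[D - r + i]? = z[D + i]?) :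
    (∃ m, 1 ≤ m ∧ m ≤ D ∧ PR w D t m ∧ ∀ u < m, s[u]? = w[D + 1 - t - m + u]?) ∨
    (∃ m, 1 ≤ m ∧ m ≤ D ∧ PL w D (D + 1 - t) m ∧
      ∀ u < m, p[u]? = w[D + 1 - t + m - 1 - u]?) := by
  -- The centre of `z` is at position `D + 1 - t` of `w`.
  have hin : ∀ i < r, r ≤ D + 1 - t + i → i < t →
      w[D + 1 - t + i - r]? = w[D + 1 - t + i]? := by
    intro i hi h1 h2
    have := hsq i hi
    rw [show D - r + i = t - 1 + (D + 1 - t + i - r) by omega,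
      show D + i = t - 1 + (D + 1 - t + i) by omega, hzw _ (by omega), hzw _ (by omega)] at this
    exact this
  by_cases hrt : r ≤ t
  · by_cases hra : r ≤ D + 1 - t
    · have := four_mul_le_of_repeat h74 (i := D + 1 - t - r) (r := r) (j := r) hr (by omega) (by
        intro q hq
        have := hin q hq (by omega) (by omega)
        convert this using 2 <;> omega)
      omega
    · by_cases hrt' : r = t
      · exact (not_border hub (l := D + 1 - r) (s := r) (by omega) hr (by omega) (by
          intro q hq
          have := hin (r - (D + 1 - t) + q) (by omega) (by omega) (by omega)
          convert this using 2 <;> omega)).elim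
      · right
        refine ⟨r - (D + 1 - t), by omega, by omega, ⟨by omega, ?_⟩, ?_⟩
        · intro q hq
          have := hin (r - (D + 1 - t) + q) (by omega) (by omega) (by omega)
          convert this using 2 <;> omega
        · intro u hu
          have h1 := hsq (r - (D + 1 - t) - 1 - u) (by omega)
          rw [show D - r + (r - (D + 1 - t) - 1 - u) = t - 2 - u by omega, hzp u (by omega),
            show D + (r - (D + 1 - t) - 1 - u) = t - 1 + (r - 1 - u) by omega,
            hzw _ (by omega)] at h1
          rw [h1]
          congr 1
          omega
  · by_cases hra : r < D + 1 - t
    · left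
      refine ⟨r - t, by omega, by omega, ⟨by omega, ?_⟩, ?_⟩
      · intro q hq
        have := hin q (by omega) (by omega) (by omega)
        convert this using 2; omega
      · intro u hu
        have h1 := hsq (t + u) (by omega)
        rw [show D + (t + u) = t + D + u by omega, hzs,
          show D - r + (t + u) = t - 1 + (D + 1 - t - (r - t) + u) by omega,
          hzw _ (by omega)] at h1
        exact h1.symm
    · exact (not_border hub (l := D + 1 - r) (s := r) (by omega) hr (by omega) (by
        intro q hq
        have := hin (r - (D + 1 - t) + q) (by omega) (by omega) (by omega)
        convert this using 2 <;> omega)).elim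

/-- Each `N(e;D,t)` falls short of `d ^ (D - 1)` by at most the weights of the repeats of a suffix
of length `t` and of a prefix of length `D + 1 - t`. -/
lemma N_lower {d D t : ℕ} (hd : 2 ≤ d) (e : Edge d D)
    (hub : Unbordered e.word) (h74 : SevenFourthsPlusFree e.word) (ht : 1 ≤ t) (htD : t ≤ D) :
    (d : ℝ) ^ (D - 1) * (1 - (∑ m ∈ Finset.Icc 1 D with PR e.word D t m, ((d : ℝ)⁻¹) ^ m)
      - ∑ m ∈ Finset.Icc 1 D with PL e.word D (D + 1 - t) m, ((d : ℝ)⁻¹) ^ m)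
      ≤ (N e D t : ℝ) := by
  obtain ⟨hw, hc, hsrc, htgt⟩ := edge_word (by omega) e
  set w := e.word with hwdef
  obtain ⟨a, w1, hwa⟩ : ∃ a w1, w = a :: w1 := by
    cases hww : w with
    | nil => rw [hww] at hw; simp at hw
    | cons a w1 => exact ⟨a, w1, rfl⟩
  obtain ⟨w2, b, hwb⟩ : ∃ w2 b, w = w2 ++ [b] :=
    ⟨w.dropLast, w.getLast (by rw [hwa]; simp), (List.dropLast_append_getLast _).symm⟩
  let full := ext a (t - 1) ×ˢ ext b (D - t)
  let BR : ℕ → Finset (List (Fin (d + 1)) × List (Fin (d + 1))) := fun m =>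
    ext a (t - 1) ×ˢ (ext b (D - t)).filter (fun s => ∀ u < m, s[u]? = w[D + 1 - t - m + u]?)
  let BL : ℕ → Finset (List (Fin (d + 1)) × List (Fin (d + 1))) := fun m =>
    (ext a (t - 1)).filter (fun p => ∀ u < m, p[u]? = w[D + 1 - t + m - 1 - u]?) ×ˢ ext b (D - t)
  let SR := (Finset.Icc 1 D).filter (fun m => PR w D t m)
  let SL := (Finset.Icc 1 D).filter (fun m => PL w D (D + 1 - t) m)
  let good := full \ (SR.biUnion BR ∪ SL.biUnion BL)
  let S : Set (Vertex d D × Vertex d D) := {xy | dist xy.1 xy.2 = D ∧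
    ∃ p : List (Vertex d D), IsWalk p xy.1 xy.2 ∧ p.length = D + 1 ∧
      p[t-1]? = some e.src ∧ p[t]? = some e.tgt}
  let Z : List (Fin (d + 1)) × List (Fin (d + 1)) → List (Fin (d + 1)) :=
    fun ps => ps.1.reverse ++ (w ++ ps.2)
  have hfull : full.card = d ^ (D - 1) := by
    simp only [full, Finset.card_product, card_ext]
    rw [← pow_add]; congr 1; omega
  have hBR : ∀ m ∈ SR, (((BR m).card : ℕ) : ℝ) ≤ (d : ℝ) ^ (D - 1) * ((d : ℝ)⁻¹) ^ m := by
    intro m hm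
    obtain ⟨_, h1, _⟩ := Finset.mem_filter.1 hm
    have : (BR m).card ≤ d ^ (t - 1) * d ^ (D - t - m) := by
      simp only [BR, Finset.card_product, card_ext]
      exact Nat.mul_le_mul_left _ (card_ext_prescribed b (D - t) m (by omega) _)
    rw [← pow_add] at this
    have e1 : (d : ℝ) ^ (D - 1) * ((d : ℝ)⁻¹) ^ m = (d : ℝ) ^ (t - 1 + (D - t - m)) := by
      rw [show D - 1 = t - 1 + (D - t - m) + m by omega, pow_add _ _ m, mul_assoc, ← mul_pow,
        mul_inv_cancel₀ (by positivity), one_pow, mul_one]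
    rw [e1]
    exact_mod_cast this
  have hBL : ∀ m ∈ SL, (((BL m).card : ℕ) : ℝ) ≤ (d : ℝ) ^ (D - 1) * ((d : ℝ)⁻¹) ^ m := by
    intro m hm
    obtain ⟨_, h1, _⟩ := Finset.mem_filter.1 hm
    have : (BL m).card ≤ d ^ (t - 1 - m) * d ^ (D - t) := by
      simp only [BL, Finset.card_product, card_ext]
      exact Nat.mul_le_mul_right _ (card_ext_prescribed a (t - 1) m (by omega) _)
    rw [← pow_add] at this
    have e1 : (d : ℝ) ^ (D - 1) * ((d : ℝ)⁻¹) ^ m = (d : ℝ) ^ (t - 1 - m + (D - t)) := by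
      rw [show D - 1 = t - 1 - m + (D - t) + m by omega, pow_add _ _ m, mul_assoc, ← mul_pow,
        mul_inv_cancel₀ (by positivity), one_pow, mul_one]
    rw [e1]
    exact_mod_cast this
  have hgood_card : (d : ℝ) ^ (D - 1) * (1 - (∑ m ∈ SR, ((d : ℝ)⁻¹) ^ m)
      - ∑ m ∈ SL, ((d : ℝ)⁻¹) ^ m) ≤ (good.card : ℝ) := by
    have h1 : full.card ≤ good.card + (∑ m ∈ SR, (BR m).card + ∑ m ∈ SL, (BL m).card) := by
      have h2 := Finset.le_card_sdiff (SR.biUnion BR ∪ SL.biUnion BL) full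
      have h3 := Finset.card_union_le (SR.biUnion BR) (SL.biUnion BL)
      have h4 : (SR.biUnion BR).card ≤ _ := Finset.card_biUnion_le
      have h5 : (SL.biUnion BL).card ≤ _ := Finset.card_biUnion_le
      change _ ≤ good.card at h2
      omega
    rw [hfull] at h1
    have h1' : (d : ℝ) ^ (D - 1) ≤ good.card +
        (∑ m ∈ SR, ((BR m).card : ℝ) + ∑ m ∈ SL, ((BL m).card : ℝ)) := by exact_mod_cast h1
    have h2 := Finset.sum_le_sum hBR
    have h3 := Finset.sum_le_sum hBL
    rw [← Finset.mul_sum] at h2 h3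
    linarith
  -- The map `Z` embeds the good pairs of extensions into the words of admissible vertex pairs.
  have hinj : Set.InjOn Z (good : Set _) := by
    rintro ⟨p, s⟩ hps ⟨p', s'⟩ hps' h
    have h1 := (Finset.mem_product.1 (Finset.mem_sdiff.1 hps).1).1
    have h2 := (Finset.mem_product.1 (Finset.mem_sdiff.1 hps').1).1
    simp only [mem_ext] at h1 h2
    obtain ⟨h3, h4⟩ := List.append_inj h (by simp [h1.1, h2.1])
    exact Prod.ext (List.reverse_inj.1 h3) (List.append_cancel_left h4)
  have hsub : ((good.image Z : Finset _) : Set (List (Fin (d + 1))))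
      ⊆ (fun xy : Vertex d D × Vertex d D => xy.1.word ++ xy.2.word) '' S := by
    intro z hz
    obtain ⟨⟨p, s⟩, hps, rfl⟩ := Finset.mem_image.1 (Finset.mem_coe.1 hz)
    obtain ⟨hps1, hps2⟩ := Finset.mem_sdiff.1 hps
    obtain ⟨hp, hs⟩ := Finset.mem_product.1 hps1
    have hp' := mem_ext.1 hp
    have hs' := mem_ext.1 hs
    simp only at hp hs hp' hs'
    have hZl : (Z (p, s)).length = D + D := by
      simp [Z, hp'.1, hs'.1, hw]; omega
    have hZc : (Z (p, s)).IsChain (· ≠ ·) := by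
      have c1 : (w ++ s).IsChain (· ≠ ·) := by
        rw [List.isChain_append]
        refine ⟨hc, (List.isChain_cons.1 hs'.2).2, ?_⟩
        intro x hx y hy
        rw [hwb] at hx
        simp at hx
        subst hx
        exact (List.isChain_cons.1 hs'.2).1 y hy
      simp only [Z]
      rw [List.isChain_append]
      refine ⟨?_, c1, ?_⟩
      · rw [List.isChain_reverse]
        exact (List.isChain_cons.1 hp'.2).2.imp (fun _ _ h => h.symm)
      · intro x hx y hy
        rw [hwa] at hy
        simp at hy
        subst hy
        rw [List.getLast?_reverse] at hx
        exact ((List.isChain_cons.1 hp'.2).1 x hx).symm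
    have hZw : ∀ i, (Z (p, s)).drop (t - 1 + i) = (w ++ s).drop i := by
      intro i
      simp only [Z]
      rw [← List.drop_drop, List.drop_left' (by simp [hp'.1])]
    have hzw : ∀ q ≤ D, (Z (p, s))[t - 1 + q]? = w[q]? := by
      intro q hq
      have := congrArg (fun l => l[q]?) (hZw 0)
      simp only [List.getElem?_drop, Nat.add_zero, Nat.zero_add] at this
      rw [this, List.getElem?_append_left (by omega)]
    have hzs : ∀ u, (Z (p, s))[t + D + u]? = s[u]? := by
      intro u
      have := congrArg (fun l => l[u]?) (hZw (D + 1))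
      simp only [List.getElem?_drop] at this
      rw [show t + D + u = t - 1 + (D + 1) + u by omega, this,
        List.getElem?_append_right (by omega), hw]
      congr 1
      omega
    have hzp : ∀ u, u + 1 < t → (Z (p, s))[t - 2 - u]? = p[u]? := by
      intro u hu
      simp only [Z]
      rw [List.getElem?_append_left (by simp [hp'.1]; omega),
        List.getElem?_reverse (by omega), hp'.1]
      congr 1
      omega
    have hnot : ∀ k < D, ¬ ∀ q, q + k < D → (Z (p, s))[q + k]? = (Z (p, s))[D + q]? := by
      intro k hk hcon
      apply hps2
      rw [Finset.mem_union, Finset.mem_biUnion, Finset.mem_biUnion]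
      rcases square_cases hw hub h74 ht htD hzp hzw hzs (r := D - k) (by omega) (by omega) (by
        intro i hi
        rw [← hcon i (by omega)]
        congr 1
        omega) with ⟨m, hm1, hm2, hP, hu⟩ | ⟨m, hm1, hm2, hP, hu⟩
      · left
        exact ⟨m, Finset.mem_filter.2 ⟨Finset.mem_Icc.2 ⟨hm1, hm2⟩, hP⟩,
          Finset.mem_product.2 ⟨hp, Finset.mem_filter.2 ⟨hs, hu⟩⟩⟩
      · right
        exact ⟨m, Finset.mem_filter.2 ⟨Finset.mem_Icc.2 ⟨hm1, hm2⟩, hP⟩,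
          Finset.mem_product.2 ⟨Finset.mem_filter.2 ⟨hp, hu⟩, hs⟩⟩
    obtain ⟨hdist, pw, hpw, hpl, hpi⟩ := window_dist (Z (p, s)) hZc hZl hnot
    refine ⟨(_, _), ⟨hdist, pw, hpw, hpl, ?_, ?_⟩, ?_⟩
    · rw [hpi (t - 1) (by omega)]
      congr 1
      apply Vertex.eq_of_word
      simp only [window]
      rw [hsrc, ← Nat.add_zero (t - 1), hZw 0, List.drop_zero,
        List.take_append_of_le_length (by omega)]
    · rw [hpi t htD]
      congr 1
      apply Vertex.eq_of_word
      simp only [window]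
      have := hZw 1
      rw [show t - 1 + 1 = t by omega] at this
      rw [htgt, this, List.drop_append_of_le_length (by omega),
        List.take_left' (by simp [hw])]
    · simp only [List.drop_zero]
      rw [List.take_of_length_le (l := (Z (p, s)).drop D) (by simp [hZl]), List.take_append_drop]
  have hN : good.card ≤ N e D t := by
    rw [← Finset.card_image_of_injOn hinj, ← Set.ncard_coe_finset]
    exact (Set.ncard_le_ncard hsub (Set.toFinite _)).trans (Set.ncard_image_le (Set.toFinite _))
  exact hgood_card.trans (by exact_mod_cast hN)

/-- Both kinds of repeats have total weight at most `3 / (d - 1)`; those of prefixes are summed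
after reflecting `t ↦ D + 1 - t`. -/
lemma U_lower {d D : ℕ} (hd : 2 ≤ d) (e : Edge d D)
    (hub : Unbordered e.word) (h74 : SevenFourthsPlusFree e.word) (hD : 1 ≤ D) :
    ((D : ℝ) - 6 / ((d : ℝ) - 1)) * (d : ℝ) ^ (D - 1) ≤ (U e D : ℝ) := by
  have hw := (edge_word hD e).1
  have hR := sum_repeats_le (D := D) hd (PR e.word D) (fun j m hj h => PR_le h74 hw hj h)
    (fun j j' m hj hjj h1 h2 => PR_gap h74 hw hj hjj h1 h2)
  have hL := sum_repeats_le (D := D) hd (PL e.word D) (fun j m hj h => PL_le h74 hw hj h)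
    (fun j j' m hj hjj h1 h2 => PL_gap h74 hw hjj h1 h2)
  rw [← Finset.sum_nbij' (s := Finset.Icc 1 D) (t := Finset.Icc 1 D)
    (f := fun t => ∑ m ∈ Finset.Icc 1 D with PL e.word D (D + 1 - t) m, ((d : ℝ)⁻¹) ^ m)
    (fun t => D + 1 - t) (fun t => D + 1 - t)
    (by intro t ht; simp at ht ⊢; omega) (by intro t ht; simp at ht ⊢; omega)
    (by intro t ht; simp at ht ⊢; omega) (by intro t ht; simp at ht ⊢; omega)
    (by intro t ht; rfl)] at hL
  have hsum := Finset.sum_le_sum (s := Finset.Icc 1 D) (fun t ht =>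
    N_lower hd e hub h74 (Finset.mem_Icc.1 ht).1 (Finset.mem_Icc.1 ht).2)
  rw [← Finset.mul_sum, Finset.sum_sub_distrib, Finset.sum_sub_distrib] at hsum
  simp only [Finset.sum_const, Nat.card_Icc, Nat.add_sub_cancel, nsmul_eq_mul, mul_one] at hsum
  rw [U, Nat.cast_sum]
  refine le_trans ?_ hsum
  rw [mul_comm]
  apply mul_le_mul_of_nonneg_left _ (by positivity)
  have : (6 : ℝ) / (d - 1) = 3 / (d - 1) + 3 / (d - 1) := by ring
  linarith

/-! ### Shortening geodesics -/

/-- A vertex has at most `d` out-neighbours, distinguished by their last letter. -/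
lemma card_out_le {d D : ℕ} (hD : 1 ≤ D) (u : Vertex d D) (s : Finset (Vertex d D))
    (hs : ∀ v ∈ s, Adj u v) : s.card ≤ d := by
  have hlen := fun v : Vertex d D => v.length_eq
  have hcard : (Finset.univ.erase (u.word[D - 1]'(by rw [hlen]; omega))).card = d := by simp
  refine le_of_le_of_eq ?_ hcard
  apply Finset.card_le_card_of_injOn (fun v => v.word[D - 1]'(by rw [hlen]; omega))
  · intro v hv
    obtain ⟨w, hl, hc, hu, hv⟩ := hs v hv
    have h := List.isChain_iff_getElem.1 hc (D - 1) (by omega)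
    simp only [Finset.coe_erase, Finset.coe_univ, Set.mem_sdiff, Set.mem_univ, true_and,
      Set.mem_singleton_iff]
    intro heq
    apply h
    simp only [hu, hv, List.getElem_dropLast, List.getElem_tail] at heq
    exact heq.symm
  · intro v hv v' hv' h
    apply Vertex.eq_of_word
    apply List.ext_getElem?
    intro q
    rcases lt_trichotomy (q + 1) D with hq | hq | hq
    · rw [← adj_shift (hs v hv) hq, ← adj_shift (hs v' hv') hq]
    · obtain rfl : q = D - 1 := by omega
      rw [List.getElem?_eq_getElem (by rw [hlen]; omega),
        List.getElem?_eq_getElem (by rw [hlen]; omega)]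
      exact congrArg some h
    · rw [List.getElem?_eq_none (by rw [hlen]; omega), List.getElem?_eq_none (by rw [hlen]; omega)]

/-- A vertex has at most `d` in-neighbours, distinguished by their first letter. -/
lemma card_in_le {d D : ℕ} (hD : 1 ≤ D) (v : Vertex d D) (s : Finset (Vertex d D))
    (hs : ∀ u ∈ s, Adj u v) : s.card ≤ d := by
  have hlen := fun v : Vertex d D => v.length_eq
  have hcard : (Finset.univ.erase (v.word[0]'(by rw [hlen]; omega))).card = d := by simp
  refine le_of_le_of_eq ?_ hcard
  apply Finset.card_le_card_of_injOn (fun u => u.word[0]'(by rw [hlen]; omega))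
  · intro u hu
    obtain ⟨w, hl, hc, hu, hv⟩ := hs u hu
    have h := List.isChain_iff_getElem.1 hc 0 (by omega)
    simp only [Finset.coe_erase, Finset.coe_univ, Set.mem_sdiff, Set.mem_univ, true_and,
      Set.mem_singleton_iff]
    intro heq
    apply h
    simp only [hu, hv, List.getElem_dropLast, List.getElem_tail] at heq
    exact heq
  · intro u hu u' hu' h
    apply Vertex.eq_of_word
    apply List.ext_getElem?
    intro q
    rcases q with _ | q
    · rw [List.getElem?_eq_getElem (by rw [hlen]; omega),
        List.getElem?_eq_getElem (by rw [hlen]; omega)]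
      exact congrArg some h
    · by_cases hq : q + 1 < D
      · rw [adj_shift (hs u hu) hq, adj_shift (hs u' hu') hq]
      · rw [List.getElem?_eq_none (by rw [hlen]; omega),
          List.getElem?_eq_none (by rw [hlen]; omega)]

lemma exists_walk_dist {d D : ℕ} {x y : Vertex d D} {p : List (Vertex d D)} {k : ℕ}
    (hp : IsWalk p x y) (hl : p.length = k + 1) :
    ∃ p : List (Vertex d D), IsWalk p x y ∧ p.length = dist x y + 1 :=
  Nat.sInf_mem (s := {k | ∃ p : List (Vertex d D), IsWalk p x y ∧ p.length = k + 1}) ⟨k, p, hp, hl⟩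

lemma IsWalk.concat {d D : ℕ} {x y z : Vertex d D} {p : List (Vertex d D)}
    (hp : IsWalk p x y) (h : Adj y z) : IsWalk (p ++ [z]) x z := by
  obtain ⟨h1, h2, h3⟩ := hp
  refine ⟨by simp [h1], by simp, ?_⟩
  refine List.isChain_append.2 ⟨h3, List.isChain_singleton _, ?_⟩
  intro a ha b hb
  simp only [List.head?_cons, Option.mem_def, Option.some.injEq] at ha hb
  rw [h2, Option.some.injEq] at ha
  subst ha; subst hb; exact h

lemma IsWalk.cons {d D : ℕ} {x y z : Vertex d D} {p : List (Vertex d D)}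
    (hp : IsWalk p y z) (h : Adj x y) : IsWalk (x :: p) x z := by
  obtain ⟨h1, h2, h3⟩ := hp
  refine ⟨rfl, by simp [List.getLast?_cons, h2], ?_⟩
  refine List.isChain_cons.2 ⟨?_, h3⟩
  intro b hb
  rw [h1, Option.mem_def, Option.some.injEq] at hb
  subst hb; exact h

/-- The pairs counted by `N e k t`. -/
def pairs {d D : ℕ} (e : Edge d D) (k t : ℕ) : Set (Vertex d D × Vertex d D) :=
  {xy | dist xy.1 xy.2 = k ∧ ∃ p : List (Vertex d D), IsWalk p xy.1 xy.2 ∧ p.length = k + 1 ∧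
      p[t-1]? = some e.src ∧ p[t]? = some e.tgt}

/-- Deleting the last edge of a geodesic. -/
lemma N_step_right {d D : ℕ} (hD : 1 ≤ D) (e : Edge d D) {k t : ℕ} (htk : t ≤ k) :
    N e (k + 1) t ≤ N e k t * d := by
  have := Fintype.ofFinite (Vertex d D)
  let A := (Set.toFinite (pairs e k t)).toFinset
  let f : Vertex d D × Vertex d D → Finset (Vertex d D × Vertex d D) := fun xy =>
    (Finset.univ.filter (fun y => Adj xy.2 y)).image (fun y => (xy.1, y))
  have hsub : pairs e (k + 1) t ⊆ ((A.biUnion f : Finset _) : Set _) := by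
    rintro ⟨x, y⟩ ⟨hd, p, hp, hl, h1, h2⟩
    simp only at hd hp
    obtain ⟨q, y', rfl⟩ : ∃ q y', p = q ++ [y'] := by
      rcases List.eq_nil_or_concat p with rfl | ⟨q, y', rfl⟩
      · simp at hl
      · exact ⟨q, y', by simp⟩
    obtain ⟨hp1, hp2, hp3⟩ := hp
    have hql : q.length = k + 1 := by simpa using hl
    have hp3' := List.isChain_append.1 hp3
    obtain ⟨v, hv⟩ : ∃ v, q.getLast? = some v :=
      ⟨_, List.getLast?_eq_some_getLast (by intro h; simp [h] at hql)⟩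
    simp only [List.getLast?_append, List.getLast?_singleton, Option.some_or,
      Option.some.injEq] at hp2
    subst hp2
    have hadj : Adj v y' := hp3'.2.2 v hv y' rfl
    have hq : IsWalk q x v := ⟨by
      rwa [List.head?_append_of_ne_nil _ (by intro h; simp [h] at hql)] at hp1, hv, hp3'.1⟩
    obtain ⟨p', hp', hl'⟩ := exists_walk_dist hq hql
    have hle := dist_le hq hql
    have hge := dist_le (k := dist x v + 1) (hp'.concat hadj) (by simp [hl'])
    refine Finset.mem_coe.2 (Finset.mem_biUnion.2 ⟨(x, v), ?_, ?_⟩)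
    · rw [List.getElem?_append_left (by omega)] at h1 h2
      exact (Set.Finite.mem_toFinset _).2 ⟨by simp only; omega, q, hq, hql, h1, h2⟩
    · exact Finset.mem_image.2 ⟨y', Finset.mem_filter.2 ⟨Finset.mem_univ _, hadj⟩, rfl⟩
  calc N e (k + 1) t = (pairs e (k + 1) t).ncard := rfl
    _ ≤ (A.biUnion f).card := by
      rw [← Set.ncard_coe_finset]
      exact Set.ncard_le_ncard hsub (Set.toFinite _)
    _ ≤ A.card * d := Finset.card_biUnion_le_card_mul _ _ _ (fun xy _ =>
      Finset.card_image_le.trans (card_out_le hD xy.2 _ (fun v hv => (Finset.mem_filter.1 hv).2)))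
    _ = N e k t * d := by
      rw [← Set.ncard_eq_toFinset_card]; rfl

/-- Deleting the first edge of a geodesic. -/
lemma N_step_left {d D : ℕ} (hD : 1 ≤ D) (e : Edge d D) {k t : ℕ} (ht : 1 ≤ t) :
    N e (k + 1) (t + 1) ≤ N e k t * d := by
  have := Fintype.ofFinite (Vertex d D)
  let A := (Set.toFinite (pairs e k t)).toFinset
  let f : Vertex d D × Vertex d D → Finset (Vertex d D × Vertex d D) := fun xy =>
    (Finset.univ.filter (fun x => Adj x xy.1)).image (fun x => (x, xy.2))
  have hsub : pairs e (k + 1) (t + 1) ⊆ ((A.biUnion f : Finset _) : Set _) := by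
    rintro ⟨x, y⟩ ⟨hd, p, hp, hl, h1, h2⟩
    simp only at hd hp
    match p, hl with
    | x' :: v :: q, hl =>
    obtain ⟨hp1, hp2, hp3⟩ := hp
    have hql : (v :: q).length = k + 1 := by simpa using hl
    have hp3' : Adj x' v ∧ (v :: q).IsChain Adj := List.isChain_cons_cons.1 hp3
    simp only [List.head?_cons, Option.some.injEq] at hp1
    subst hp1
    have hq : IsWalk (v :: q) v y := ⟨rfl, by rwa [List.getLast?_cons_cons] at hp2, hp3'.2⟩
    obtain ⟨p', hp', hl'⟩ := exists_walk_dist hq hql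
    have hle := dist_le hq hql
    have hge := dist_le (k := dist v y + 1) (hp'.cons hp3'.1) (by simp [hl'])
    refine Finset.mem_coe.2 (Finset.mem_biUnion.2 ⟨(v, y), ?_, ?_⟩)
    · rw [List.getElem?_cons_succ] at h2
      rw [show t + 1 - 1 = t - 1 + 1 by omega, List.getElem?_cons_succ] at h1
      exact (Set.Finite.mem_toFinset _).2 ⟨by simp only; omega, v :: q, hq, hql, h1, h2⟩
    · exact Finset.mem_image.2 ⟨x', Finset.mem_filter.2 ⟨Finset.mem_univ _, hp3'.1⟩, rfl⟩
  calc N e (k + 1) (t + 1) = (pairs e (k + 1) (t + 1)).ncard := rfl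
    _ ≤ (A.biUnion f).card := by
      rw [← Set.ncard_coe_finset]
      exact Set.ncard_le_ncard hsub (Set.toFinite _)
    _ ≤ A.card * d := Finset.card_biUnion_le_card_mul _ _ _ (fun xy _ =>
      Finset.card_image_le.trans (card_in_le hD xy.1 _ (fun v hv => (Finset.mem_filter.1 hv).2)))
    _ = N e k t * d := by
      rw [← Set.ncard_eq_toFinset_card]; rfl

/-- Weighting the two ways of shortening by `k + 1 - t` and `t`, each `N(e;k+1,t)` is counted
exactly `k` times. -/
lemma U_step {d D : ℕ} (hD : 1 ≤ D) (e : Edge d D) (k : ℕ) :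
    k * U e (k + 1) ≤ (k + 1) * (U e k * d) := by
  have h : ∀ F : ℕ → ℕ, k * ∑ t ∈ Finset.range (k + 1), F t
      = ∑ t ∈ Finset.range k, ((k - t) * F t + (t + 1) * F (t + 1)) := by
    intro F
    have h1 := Finset.sum_range_succ (fun t => (k - t) * F t) k
    have h2 := Finset.sum_range_succ' (fun t => t * F t) k
    simp only [Nat.sub_self, zero_mul, add_zero] at h1 h2
    rw [Finset.sum_add_distrib, ← h1, ← h2, ← Finset.sum_add_distrib, Finset.mul_sum]
    apply Finset.sum_congr rfl
    intro t ht
    rw [← add_mul, Nat.sub_add_cancel (by simp at ht; omega)]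
  have hU : ∀ k' , U e k' = ∑ t ∈ Finset.range k', N e k' (t + 1) := by
    intro k'
    rw [U, Finset.range_eq_Ico, Finset.sum_Ico_add' (fun t => N e k' t) 0 k' 1]
    rfl
  rw [hU, hU, h (fun t => N e (k + 1) (t + 1)), Finset.sum_mul, Finset.mul_sum]
  apply Finset.sum_le_sum
  intro t ht
  have ht' := Finset.mem_range.1 ht
  have h1 := N_step_right hD e (k := k) (t := t + 1) (by omega)
  have h2 := N_step_left hD e (k := k) (t := t + 1) (by omega)
  calc (k - t) * N e (k + 1) (t + 1) + (t + 1) * N e (k + 1) (t + 1 + 1)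
      ≤ (k - t) * (N e k (t + 1) * d) + (t + 1) * (N e k (t + 1) * d) :=
        Nat.add_le_add (Nat.mul_le_mul_left _ h1) (Nat.mul_le_mul_left _ h2)
    _ = (k + 1) * (N e k (t + 1) * d) := by
        rw [← add_mul]; congr 1; omega

/-- Iterating the previous inequality: `U_{D-i}(e) ≥ (1 - i / D) d^{-i} U_D(e)`. -/
lemma U_level {d D : ℕ} (hd : 2 ≤ d) (hD : 1 ≤ D) (e : Edge d D) (i : ℕ) (hi : i < D) :
    (((D : ℝ) - i) * ((d : ℝ)⁻¹) ^ i) * U e D ≤ D * U e (D - i) := by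
  induction i with
  | zero => simp
  | succ i ih =>
    have ih := ih (by omega)
    have hs := U_step hD e (D - (i + 1))
    rw [show D - (i + 1) + 1 = D - i by omega] at hs
    have hs' : ((D : ℝ) - (i + 1)) * U e (D - i) ≤ (D - i) * (U e (D - (i + 1)) * d) := by
      have : (((D - (i + 1)) * U e (D - i) : ℕ) : ℝ) ≤
          (((D - i) * (U e (D - (i + 1)) * d) : ℕ) : ℝ) := by
        exact_mod_cast hs
      push_cast [Nat.cast_sub (show i + 1 ≤ D by omega), Nat.cast_sub (show i ≤ D by omega)] at this
      exact this
    have hiD : (i : ℝ) + 1 < D := by exact_mod_cast hi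
    have hd0 : (0 : ℝ) < d := by positivity
    have hDi : (0 : ℝ) < (D : ℝ) - i := by linarith
    have hpos : (0 : ℝ) < ((D : ℝ) - i) * d := by positivity
    refine le_of_mul_le_mul_left ?_ hpos
    calc ((D : ℝ) - i) * d * ((((D : ℝ) - (i + 1 : ℕ)) * ((d : ℝ)⁻¹) ^ (i + 1)) * U e D)
        = ((D : ℝ) - (i + 1)) * ((((D : ℝ) - i) * ((d : ℝ)⁻¹) ^ i) * U e D) := by
          rw [pow_succ]; push_cast; field_simp
      _ ≤ ((D : ℝ) - (i + 1)) * (D * U e (D - i)) :=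
          mul_le_mul_of_nonneg_left ih (by linarith)
      _ = D * (((D : ℝ) - (i + 1)) * U e (D - i)) := by ring
      _ ≤ D * ((D - i) * (U e (D - (i + 1)) * d)) :=
          mul_le_mul_of_nonneg_left hs' (by positivity)
      _ = ((D : ℝ) - i) * d * (D * U e (D - (i + 1))) := by ring

/-- Summing the level estimates; the remainder of the partial sum up to `D` is negative and can be
dropped. -/
lemma cong_lower {d D : ℕ} (hd : 2 ≤ d) (hD : 1 ≤ D) (e : Edge d D) :
    ((d : ℝ) / ((d : ℝ) - 1)) * (1 - 1 / ((D : ℝ) * ((d : ℝ) - 1))) * U e D ≤ (cong e : ℝ) := by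
  have hd' : (2 : ℝ) ≤ d := by exact_mod_cast hd
  have hD' : (0 : ℝ) < D := by exact_mod_cast hD
  have hcong : cong e = ∑ i ∈ Finset.range D, U e (D - i) := by
    rw [cong]
    apply Finset.sum_nbij' (fun k => D - k) (fun i => D - i)
    · intro k hk; simp at hk ⊢; omega
    · intro k hk; simp at hk ⊢; omega
    · intro k hk; simp at hk ⊢; omega
    · intro k hk; simp at hk ⊢; omega
    · intro k hk
      simp at hk
      rw [show D - (D - k) = k by omega]
  have hs := Finset.sum_le_sum (s := Finset.range D)
    (fun i hi => U_level hd hD e i (Finset.mem_range.1 hi))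
  rw [← Finset.sum_mul, ← Finset.mul_sum, sum_levels hd] at hs
  rw [hcong, Nat.cast_sum]
  refine le_of_mul_le_mul_left (le_trans ?_ hs) hD'
  have h1 : (0 : ℝ) < (d : ℝ) - 1 := by linarith
  have hrem : 0 ≤ ((d : ℝ)⁻¹) ^ D * ((d : ℝ) / (d - 1) * (1 / (d - 1))) := by positivity
  rw [← mul_assoc]
  apply mul_le_mul_of_nonneg_right _ (by positivity)
  have : (D : ℝ) * ((d : ℝ) / (d - 1) * (1 - 1 / (D * (d - 1))))
      = (d : ℝ) / (d - 1) * (D - 1 / (d - 1)) := by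
    field_simp
  rw [this]
  nlinarith

end Kautz


/-- Fix `d ≥ 2`, `D ≥ 2` and set `C_d := 8/(d−1)`.  If `e` is a directed edge
of `K(d,D)` whose edge-word is an unbordered `7/4⁺`-power-free ternary word,
then `U_D(e) ≥ (D − C_d)·d^{D−1}` and
`cong(e) ≥ (d/(d−1))·(1 − 1/(D(d−1)))·(D − C_d)·d^{D−1}`. -/
theorem statement1 (d D : ℕ) (hd : 2 ≤ d) (hD : 2 ≤ D) (e : Kautz.Edge d D)
    (hub : Kautz.Unbordered e.word)
    (h74 : Kautz.SevenFourthsPlusFree e.word)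
    (htern : Kautz.IsTernary e.word) :
    ((D : ℝ) - 8 / ((d : ℝ) - 1)) * (d : ℝ) ^ (D - 1) ≤ (Kautz.U e D : ℝ) ∧
    ((d : ℝ) / ((d : ℝ) - 1)) * (1 - 1 / ((D : ℝ) * ((d : ℝ) - 1))) *
        (((D : ℝ) - 8 / ((d : ℝ) - 1)) * (d : ℝ) ^ (D - 1))
      ≤ (Kautz.cong e : ℝ) := by
  have hd' : (2 : ℝ) ≤ d := by exact_mod_cast hd
  have hD' : (2 : ℝ) ≤ D := by exact_mod_cast hD
  have h1 : (0 : ℝ) < (d : ℝ) - 1 := by linarith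
  have hU : ((D : ℝ) - 8 / ((d : ℝ) - 1)) * (d : ℝ) ^ (D - 1) ≤ (Kautz.U e D : ℝ) := by
    refine le_trans ?_ (Kautz.U_lower hd e hub h74 (by omega))
    apply mul_le_mul_of_nonneg_right _ (by positivity)
    have : (6 : ℝ) / (d - 1) ≤ 8 / (d - 1) := by gcongr; norm_num
    linarith
  refine ⟨hU, le_trans ?_ (Kautz.cong_lower hd (by omega) e)⟩
  apply mul_le_mul_of_nonneg_left hU
  apply mul_nonneg (by positivity)
  rw [sub_nonneg, div_le_one (by positivity)]
  nlinarith
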